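/- (Lyapunov inequality for the σ-modification adaptive controller of the wing-rock example.) Consider the system ẋ₁ = x₂, ẋ₂ = θ₁x₁ + θ₂x₂ + θ₃x₁x₂ + θ₄x₂² + x₃ + d₁, ẋ₃ = u + d₂, where θ = (θ₁,θ₂,θ₃,θ₄) ∈ ℝ⁴ is a constant vector and d = (d₁,d₂) ∈ ℝ². Let c, Γ > 0, K ≥ 1 + 2c, σ ≥ 0 be constants. Define ζ = x₂ + 2cx₁, χ = θ̂₁x₁ + θ̂₂x₂ + θ̂₃x₁x₂ + θ̂₄x₂² + 2cx₂ + Kζ + x₁ + x₃, φ = 2c + K + θ̂₂ + θ̂₃x₁ + 2θ̂₄x₂, the feedback u = −(w₁ + 2c + w₃x₂)x₁ − (θ̂₁ + w₂ + 2 + 2Kc)x₂ − (θ̂₃ + w₄)x₂² − φ(θ̂₁x₁ + θ̂₂x₂ + θ̂₃x₁x₂ + θ̂₄x₂² + x₃) − (K + φ²)χ, and the update laws dθ̂ᵢ/dt = wᵢ with w₁ = Γ(ζ + φχ)x₁ − σθ̂₁, w₂ = Γ(ζ + φχ)x₂ − σθ̂₂, w₃ = Γ(ζ + φχ)x₁x₂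 − σθ̂₃, w₄ = Γ(ζ + φχ)x₂² − σθ̂₄. Define W(x,θ̂) = ½x₁² + ½ζ² + ½χ² + (1/(2Γ))Σ_{i=1}^{4}(θ̂ᵢ − θᵢ)². Then the derivative of W along the closed-loop vector field satisfies, for all x ∈ ℝ³, d ∈ ℝ², θ̂ ∈ ℝ⁴, θ ∈ ℝ⁴: Ẇ ≤ −c(x₁² + ζ² + χ²) − (σ/(2Γ))Σ_{i=1}^{4}(θ̂ᵢ − θᵢ)² + ½|d|² + (σ/(2Γ))|θ|². -/

import Mathlib

/-!
The regressor is `p = (x₁, x₂, x₁x₂, x₂²)` and the estimation error is `e = θ̂ - θ`. Along the closed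
loop the backstepping coordinates satisfy
`ẋ₁ = ζ - 2cx₁`, `ζ̇ = χ - Kζ - x₁ - e·p + d₁`, `χ̇ = -ζ - φ(e·p) + φd₁ - (K + φ²)χ + d₂`.
The cross terms `x₁ζ` and `ζχ` cancel in `Ẇ`, and the update law cancels
`(ζ + φχ)(e·p)`, leaving the leakage term `-(σ/Γ) e·θ̂`. Completing squares gives the exact identity

`Ẇ = RHS - [c x₁² + (K-1-c)ζ² + (K-½-c)χ² + ½(ζ-φχ)² + ½(ζ+φχ-d₁)² + ½(χ-d₂)² + (σ/2Γ)|θ̂|²]`,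

where `RHS` is the claimed upper bound; the bracket is nonnegative because `K ≥ 1 + 2c`.
`fderiv_Wwing` computes the directional derivative.
-/

noncomputable section

/-- The Lyapunov function `W(x,θ̂) = ½x₁² + ½ζ² + ½χ² + (1/2Γ)Σ(θ̂ᵢ − θᵢ)²` of the
σ-modification adaptive controller of the wing-rock example, with `ζ = x₂ + 2cx₁` and
`χ = θ̂₁x₁ + θ̂₂x₂ + θ̂₃x₁x₂ + θ̂₄x₂² + 2cx₂ + Kζ + x₁ + x₃`. -/
def Wwing (Γ c K θ₁ θ₂ θ₃ θ₄ : ℝ) (q : (ℝ × ℝ × ℝ) × (ℝ × ℝ × ℝ × ℝ)) : ℝ :=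
  (1/2) * q.1.1^2 + (1/2) * (q.1.2.1 + 2*c*q.1.1)^2 +
    (1/2) * (q.2.1*q.1.1 + q.2.2.1*q.1.2.1 + q.2.2.2.1*q.1.1*q.1.2.1 +
      q.2.2.2.2*q.1.2.1^2 + 2*c*q.1.2.1 + K*(q.1.2.1 + 2*c*q.1.1) + q.1.1 + q.1.2.2)^2 +
    (1/(2*Γ)) * ((q.2.1 - θ₁)^2 + (q.2.2.1 - θ₂)^2 + (q.2.2.2.1 - θ₃)^2 +
      (q.2.2.2.2 - θ₄)^2)

/-- The directional derivative of `Wwing`, by the chain rule along the line `t ↦ q + t v`; the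
factor multiplying `χ` is `χ̇`. -/
lemma fderiv_Wwing (Γ c K θ₁ θ₂ θ₃ θ₄ x₁ x₂ x₃ a₁ a₂ a₃ a₄ v₁ v₂ v₃ w₁ w₂ w₃ w₄ : ℝ) :
    fderiv ℝ (Wwing Γ c K θ₁ θ₂ θ₃ θ₄) ((x₁, x₂, x₃), (a₁, a₂, a₃, a₄))
        ((v₁, v₂, v₃), (w₁, w₂, w₃, w₄)) =
      x₁*v₁ + (x₂ + 2*c*x₁)*(v₂ + 2*c*v₁)
      + (a₁*x₁ + a₂*x₂ + a₃*x₁*x₂ + a₄*x₂^2 + 2*c*x₂ + K*(x₂ + 2*c*x₁) + x₁ + x₃) *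
        (w₁*x₁ + w₂*x₂ + w₃*x₁*x₂ + w₄*x₂^2 + (a₁ + a₃*x₂ + 2*K*c + 1)*v₁
          + (2*c + K + a₂ + a₃*x₁ + 2*a₄*x₂)*v₂ + v₃)
      + (1/Γ) * ((a₁ - θ₁)*w₁ + (a₂ - θ₂)*w₂ + (a₃ - θ₃)*w₃ + (a₄ - θ₄)*w₄) := by
  have hd : DifferentiableAt ℝ (Wwing Γ c K θ₁ θ₂ θ₃ θ₄)
      ((x₁, x₂, x₃), (a₁, a₂, a₃, a₄)) := by
    unfold Wwing
    fun_prop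
  rw [← hd.lineDeriv_eq_fderiv]
  have hl (x v : ℝ) : HasDerivAt (fun t : ℝ => x + t * v) v 0 := by
    simpa using ((hasDerivAt_id (0 : ℝ)).mul_const v).const_add x
  have X₁ := hl x₁ v₁
  have X₂ := hl x₂ v₂
  have X₃ := hl x₃ v₃
  have A₁ := hl a₁ w₁
  have A₂ := hl a₂ w₂
  have A₃ := hl a₃ w₃
  have A₄ := hl a₄ w₄
  have Z := X₂.add (X₁.const_mul (2*c))
  have C := ((((((((A₁.mul X₁).add (A₂.mul X₂)).add ((A₃.mul X₁).mul X₂)).add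
    (A₄.mul (X₂.pow 2))).add (X₂.const_mul (2*c))).add (Z.const_mul K)).add X₁).add X₃)
  have E := (((((A₁.sub_const θ₁).pow 2).add ((A₂.sub_const θ₂).pow 2)).add
    ((A₃.sub_const θ₃).pow 2)).add ((A₄.sub_const θ₄).pow 2)).const_mul (1/(2*Γ))
  have H := ((((X₁.pow 2).const_mul (1/2)).add ((Z.pow 2).const_mul (1/2))).add
    ((C.pow 2).const_mul (1/2))).add E
  refine (H.congr_deriv ?_).deriv
  simp
  ring

/-- Lyapunov inequality for the σ-modification adaptive controller of the
wing-rock example: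
`Ẇ ≤ −c(x₁² + ζ² + χ²) − (σ/2Γ)Σ(θ̂ᵢ − θᵢ)² + ½|d|² + (σ/2Γ)|θ|²`. -/
theorem wingrock_sigma_mod_lyapunov (c Γ K σ : ℝ)
    (hc : 0 < c) (hΓ : 0 < Γ) (hK : 1 + 2*c ≤ K) (hσ : 0 ≤ σ)
    (x₁ x₂ x₃ th₁ th₂ th₃ th₄ θ₁ θ₂ θ₃ θ₄ d₁ d₂ : ℝ) :
    let ζ := x₂ + 2*c*x₁
    let χ := th₁*x₁ + th₂*x₂ + th₃*x₁*x₂ + th₄*x₂^2 + 2*c*x₂ + K*ζ + x₁ + x₃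
    let φ := 2*c + K + th₂ + th₃*x₁ + 2*th₄*x₂
    let w₁ := Γ*(ζ + φ*χ)*x₁ - σ*th₁
    let w₂ := Γ*(ζ + φ*χ)*x₂ - σ*th₂
    let w₃ := Γ*(ζ + φ*χ)*x₁*x₂ - σ*th₃
    let w₄ := Γ*(ζ + φ*χ)*x₂^2 - σ*th₄
    let u := -(w₁ + 2*c + w₃*x₂)*x₁ - (th₁ + w₂ + 2 + 2*K*c)*x₂ - (th₃ + w₄)*x₂^2
      - φ*(th₁*x₁ + th₂*x₂ + th₃*x₁*x₂ + th₄*x₂^2 + x₃) - (K + φ^2)*χ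
    fderiv ℝ (Wwing Γ c K θ₁ θ₂ θ₃ θ₄) ((x₁, x₂, x₃), (th₁, th₂, th₃, th₄))
        ((x₂, θ₁*x₁ + θ₂*x₂ + θ₃*x₁*x₂ + θ₄*x₂^2 + x₃ + d₁, u + d₂),
          (w₁, w₂, w₃, w₄))
      ≤ -c * (x₁^2 + ζ^2 + χ^2)
        - (σ/(2*Γ)) * ((th₁ - θ₁)^2 + (th₂ - θ₂)^2 + (th₃ - θ₃)^2 + (th₄ - θ₄)^2)
        + (1/2) * (d₁^2 + d₂^2) + (σ/(2*Γ)) * (θ₁^2 + θ₂^2 + θ₃^2 + θ₄^2) := by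
  intro ζ χ φ w₁ w₂ w₃ w₄ u
  rw [fderiv_Wwing]
  have hζ : 0 ≤ (K - 1 - c) * ζ^2 := mul_nonneg (by linarith) (sq_nonneg _)
  have hχ : 0 ≤ (K - 1/2 - c) * χ^2 := mul_nonneg (by linarith) (sq_nonneg _)
  have hx : 0 ≤ c * x₁^2 := by positivity
  have hθ : 0 ≤ (σ/(2*Γ)) * (th₁^2 + th₂^2 + th₃^2 + th₄^2) := by positivity
  have hζdot : (θ₁*x₁ + θ₂*x₂ + θ₃*x₁*x₂ + θ₄*x₂^2 + x₃ + d₁) + 2*c*x₂ =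
      χ - K*ζ - x₁ - ((th₁ - θ₁)*x₁ + (th₂ - θ₂)*x₂ + (th₃ - θ₃)*(x₁*x₂) + (th₄ - θ₄)*x₂^2)
        + d₁ := by
    simp only [χ]
    ring
  have hχdot : w₁*x₁ + w₂*x₂ + w₃*x₁*x₂ + w₄*x₂^2 + (th₁ + th₃*x₂ + 2*K*c + 1)*x₂
      + φ*(θ₁*x₁ + θ₂*x₂ + θ₃*x₁*x₂ + θ₄*x₂^2 + x₃ + d₁) + (u + d₂) =
      -ζ - φ*((th₁ - θ₁)*x₁ + (th₂ - θ₂)*x₂ + (th₃ - θ₃)*(x₁*x₂) + (th₄ - θ₄)*x₂^2)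
        + φ*d₁ - (K + φ^2)*χ + d₂ := by
    simp only [u, ζ]
    ring
  -- The update law yields the term cancelling `(ζ + φχ)(e·p)`, plus the leakage, polarized.
  have hadapt : (1/Γ) * ((th₁ - θ₁)*w₁ + (th₂ - θ₂)*w₂ + (th₃ - θ₃)*w₃ + (th₄ - θ₄)*w₄) =
      (ζ + φ*χ) *
        ((th₁ - θ₁)*x₁ + (th₂ - θ₂)*x₂ + (th₃ - θ₃)*(x₁*x₂) + (th₄ - θ₄)*x₂^2)
      - (σ/(2*Γ)) * ((th₁ - θ₁)^2 + (th₂ - θ₂)^2 + (th₃ - θ₃)^2 + (th₄ - θ₄)^2)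
      - (σ/(2*Γ)) * (th₁^2 + th₂^2 + th₃^2 + th₄^2)
      + (σ/(2*Γ)) * (θ₁^2 + θ₂^2 + θ₃^2 + θ₄^2) := by
    simp only [w₁, w₂, w₃, w₄]
    generalize ζ + φ*χ = s
    field_simp
    ring
  have hx₂ : x₁*x₂ = x₁*(ζ - 2*c*x₁) := by
    simp only [ζ]
    ring
  change x₁*x₂ + ζ*(_ + 2*c*x₂) + χ*(w₁*x₁ + w₂*x₂ + w₃*x₁*x₂ + w₄*x₂^2
    + (th₁ + th₃*x₂ + 2*K*c + 1)*x₂ + φ*_ + (u + d₂)) + _ ≤ _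
  rw [hζdot, hχdot, hadapt, hx₂]
  generalize (th₁ - θ₁)*x₁ + (th₂ - θ₂)*x₂ + (th₃ - θ₃)*(x₁*x₂) + (th₄ - θ₄)*x₂^2 = r
  clear_value u w₁ w₂ w₃ w₄ φ χ ζ
  linarith [sq_nonneg (ζ - φ*χ), sq_nonneg (ζ + φ*χ - d₁), sq_nonneg (χ - d₂)]
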